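/- (Main result: rejection of the acute-angle and obtuse-angle hypotheses in the Euclidean plane.) In a Saccheri quadrilateral A B Γ Δ with base ΔΓ (right angles at Δ and Γ, equal legs dist A Δ = dist B Γ, with A and B strictly on the same side of the line through Δ and Γ), the summit angles are right angles: ∠ Δ A B = π/2 and ∠ Γ B A = π/2, i.e. the quadrilateral is a rectangle. -/

import Mathlib

open EuclideanGeometry Real RealInnerProductSpace

/-!
In Euclidean geometry the legs of a Saccheri quadrilateral, both perpendicular to the base and
pointing to the same side of it, are parallel and equally directed, hence equal as vectors. The
quadrilateral is therefore a parallelogram, and its summit is perpendicular to its legs because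
its base is.
-/

section OrthogonalFeet

variable {V P : Type*} [NormedAddCommGroup V] [AddTorsor V P]

theorem eq_of_vsub_mem_orthogonal_direction {𝕜 : Type*} [RCLike 𝕜] [InnerProductSpace 𝕜 V]
    {s : AffineSubspace 𝕜 P} {x p q : P} (hp : p ∈ s) (hq : q ∈ s)
    (hxp : x -ᵥ p ∈ s.directionᗮ) (hxq : x -ᵥ q ∈ s.directionᗮ) : p = q := by
  have hperp : p -ᵥ q ∈ s.directionᗮ := by
    simpa only [vsub_sub_vsub_cancel_left] using s.directionᗮ.sub_mem hxq hxp
  exact vsub_eq_zero_iff_eq.1 <|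
    Submodule.disjoint_def.1 s.direction.orthogonal_disjoint _ (s.vsub_mem_direction hp hq) hperp

theorem sameRay_vsub_of_wSameSide [InnerProductSpace ℝ V] {s : AffineSubspace ℝ P}
    {x y p q : P} (hp : p ∈ s) (hq : q ∈ s)
    (hx : x -ᵥ p ∈ s.directionᗮ) (hy : y -ᵥ q ∈ s.directionᗮ) (hxy : s.WSameSide x y) :
    SameRay ℝ (x -ᵥ p) (y -ᵥ q) := by
  obtain rfl | hne := eq_or_ne x p
  · simp only [vsub_self, SameRay.zero_left]
  rcases (AffineSubspace.wSameSide_iff_exists_left hp).1 hxy with hxs | ⟨q', hq', hray⟩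
  · have hxx : x -ᵥ x ∈ s.directionᗮ := by simp only [vsub_self, Submodule.zero_mem]
    exact absurd (eq_of_vsub_mem_orthogonal_direction hxs hp hxx hx) hne
  · obtain ⟨r, -, hr⟩ := hray.exists_nonneg_left (vsub_ne_zero.2 hne)
    have hy' : y -ᵥ q' ∈ s.directionᗮ := hr ▸ s.directionᗮ.smul_mem r hx
    rwa [eq_of_vsub_mem_orthogonal_direction hq hq' hy hy']

end OrthogonalFeet

section Saccheri

variable {V P : Type*} [NormedAddCommGroup V] [InnerProductSpace ℝ V] [MetricSpace P]
  [NormedAddTorsor V P]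

theorem vsub_mem_orthogonal_direction_line_iff_angle_eq_pi_div_two {x p q : P} :
    x -ᵥ p ∈ line[ℝ, p, q].directionᗮ ↔ ∠ x p q = π / 2 := by
  rw [direction_affineSpan, vectorSpan_pair_rev,
    Submodule.mem_orthogonal_singleton_iff_inner_left,
    InnerProductGeometry.inner_eq_zero_iff_angle_eq_pi_div_two, EuclideanGeometry.angle]

/-- A Saccheri quadrilateral `A B Γ Δ` with base `ΔΓ`, legs `AΔ` and `BΓ`, and summit `AB`. The
dimension is arbitrary: the same-side condition already forces the quadrilateral to be planar. -/
structure IsSaccheri (A B Γ Δ : P) : Prop where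
  base_ne : Δ ≠ Γ
  angle_left : ∠ A Δ Γ = π / 2
  angle_right : ∠ B Γ Δ = π / 2
  dist_leg_eq : dist A Δ = dist B Γ
  sSameSide : line[ℝ, Δ, Γ].SSameSide A B

namespace IsSaccheri

variable {A B Γ Δ : P}

theorem symm (h : IsSaccheri A B Γ Δ) : IsSaccheri B A Δ Γ where
  base_ne := h.base_ne.symm
  angle_left := h.angle_right
  angle_right := h.angle_left
  dist_leg_eq := h.dist_leg_eq.symm
  sSameSide := by
    rw [Set.pair_comm]
    exact h.sSameSide.symm

theorem leg_vsub_eq (h : IsSaccheri A B Γ Δ) : A -ᵥ Δ = B -ᵥ Γ := by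
  have hA : A -ᵥ Δ ∈ line[ℝ, Δ, Γ].directionᗮ :=
    vsub_mem_orthogonal_direction_line_iff_angle_eq_pi_div_two.2 h.angle_left
  have hB : B -ᵥ Γ ∈ line[ℝ, Δ, Γ].directionᗮ := by
    rw [Set.pair_comm]
    exact vsub_mem_orthogonal_direction_line_iff_angle_eq_pi_div_two.2 h.angle_right
  have hray : SameRay ℝ (A -ᵥ Δ) (B -ᵥ Γ) :=
    sameRay_vsub_of_wSameSide (left_mem_affineSpan_pair ℝ Δ Γ) (right_mem_affineSpan_pair ℝ Δ Γ)
      hA hB h.sSameSide.wSameSide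
  have hnorm : ‖A -ᵥ Δ‖ = ‖B -ᵥ Γ‖ := by
    simpa only [dist_eq_norm_vsub V] using h.dist_leg_eq
  exact (sameRay_iff_of_norm_eq hnorm).1 hray

theorem summit_vsub_eq (h : IsSaccheri A B Γ Δ) : B -ᵥ A = Γ -ᵥ Δ := by
  rw [← vsub_sub_vsub_cancel_right B A Δ, h.leg_vsub_eq, vsub_sub_vsub_cancel_left]

theorem summit_angle_left (h : IsSaccheri A B Γ Δ) : ∠ Δ A B = π / 2 := by
  calc
    ∠ Δ A B = InnerProductGeometry.angle (-(A -ᵥ Δ)) (Γ -ᵥ Δ) := by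
      rw [EuclideanGeometry.angle, h.summit_vsub_eq, neg_vsub_eq_vsub_rev]
    _ = π - ∠ A Δ Γ := InnerProductGeometry.angle_neg_left _ _
    _ = π / 2 := by rw [h.angle_left, sub_half]

end IsSaccheri

theorem stmt16_general {A B Γ Δ : P} (h : IsSaccheri A B Γ Δ) :
    ∠ Δ A B = π / 2 ∧ ∠ Γ B A = π / 2 :=
  ⟨h.summit_angle_left, h.symm.summit_angle_left⟩

end Saccheri

theorem stmt16 (A B Γ Δ : EuclideanSpace ℝ (Fin 2))
    (hne : Δ ≠ Γ)
    (hAd : ∠ A Δ Γ = π / 2)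
    (hBg : ∠ B Γ Δ = π / 2)
    (hleg : dist A Δ = dist B Γ)
    (hside : AffineSubspace.SSameSide line[ℝ, Δ, Γ] A B) :
    ∠ Δ A B = π / 2 ∧ ∠ Γ B A = π / 2 :=
  stmt16_general ⟨hne, hAd, hBg, hleg, hside⟩
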